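/- arXiv:1112.3255 — 2 statements merged into one kernel-verified Lean document; each statement's English description precedes it below -/
import Mathlib

section
/- Let W be a finite reflection group with root system Φ, a a generic point, Φ⁺ = {α ∈ Φ : ⟨a,α⟩ > 0}, and Δ a simple system for Φ⁺. Then every reflection s belonging to W is conjugate in W to a simple reflection: there exist w ∈ W and α ∈ Δ with s = w s_α w⁻¹. -/
/-!
Call a vector signed if it or its negative lies in the cone spanned by `Δ`. The heart of the proof
is a descent: if the orbit of `x ≠ 0` under the group generated by the simple reflections is finite
and consists of signed vectors, then it contains a multiple of a simple root. Indeed, after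
replacing `x` by `-x` if necessary, let `y` be a vector of the orbit in the cone with `⟪a, y⟫`
minimal, and choose `α ∈ Δ` with `⟪y, α⟫ > 0`. Then `s_α y` is lower than `y`, so `-s_α y` lies in
the cone, and `y - s_α y` is a multiple of `α`. As `α` spans an extremal ray of the cone, `y` is a
multiple of `α`.

Applied to the roots, the descent shows that the simple reflections generate `W`, and then the
exchange condition shows that only `1` keeps every simple root positive. So if `s ∈ W` is a
reflection along `x`, then some `α ∈ Δ` has `s α` negative, and `x`, being proportional to
`α - s α`, is signed. The same holds for the conjugates of `s`, that is, along the orbit of `x`, and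
the descent applied to `x` conjugates `s` to a simple reflection.
-/

open scoped RealInnerProductSpace

variable {V : Type*} [NormedAddCommGroup V] [InnerProductSpace ℝ V]

/-- `s` acts as the orthogonal reflection along the nonzero vector `α`:
`s v = v - 2 (⟪v,α⟫/⟪α,α⟫) α`. -/
def IsReflAlong (s : V ≃ₗᵢ[ℝ] V) (α : V) : Prop :=
  α ≠ 0 ∧ ∀ v : V, s v = v - ((2 * ⟪v, α⟫ / ⟪α, α⟫) • α)

/-- `s` is a reflection. -/
def IsReflection (s : V ≃ₗᵢ[ℝ] V) : Prop :=
  ∃ α : V, IsReflAlong s α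

/-- A reflection group: a subgroup of the group of linear isometries of `V` generated by
the reflections it contains. -/
def IsReflectionGroup (W : Subgroup (V ≃ₗᵢ[ℝ] V)) : Prop :=
  W = Subgroup.closure {s | IsReflection s ∧ s ∈ W}

/-- `a` is a generic point for `W`: it is fixed by no reflection belonging to `W`. -/
def IsGeneric (W : Subgroup (V ≃ₗᵢ[ℝ] V)) (a : V) : Prop :=
  ∀ s ∈ W, IsReflection s → s a ≠ a

/-- The `W`-orbit of the point `a`. -/
def orbitSet (W : Subgroup (V ≃ₗᵢ[ℝ] V)) (a : V) : Set V :=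
  {x | ∃ w ∈ W, x = w a}

/-- The permutahedron `Perm^a(W)`: the convex hull of the `W`-orbit of `a`. -/
noncomputable def permutahedron (W : Subgroup (V ≃ₗᵢ[ℝ] V)) (a : V) : Set V :=
  convexHull ℝ (orbitSet W a)

/-- A root system for `W`. -/
structure IsRootSystem (W : Subgroup (V ≃ₗᵢ[ℝ] V)) (Φ : Set V) : Prop where
  finite : Φ.Finite
  nonempty : Φ.Nonempty
  ne_zero : ∀ α ∈ Φ, α ≠ 0
  gen : W = Subgroup.closure {s | ∃ α ∈ Φ, IsReflAlong s α}
  line : ∀ α ∈ Φ, {β ∈ Φ | ∃ t : ℝ, β = t • α} = {α, -α}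
  stable : ∀ w ∈ W, (⇑w) '' Φ = Φ

/-- The positive system determined by the generic point `a`: roots `α` with `⟪a, α⟫ > 0`. -/
def posSystem (a : V) (Φ : Set V) : Set V :=
  {α ∈ Φ | 0 < ⟪a, α⟫}

/-- `Δ` is a simple system for the positive system `Φp`: `Δ ⊆ Φp` is linearly independent and
every element of `Φp` is a linear combination of `Δ` with nonnegative coefficients. -/
def IsSimpleSystem (Φp Δ : Set V) : Prop :=
  Δ ⊆ Φp ∧ LinearIndependent ℝ ((↑) : Δ → V) ∧
    ∀ β ∈ Φp, ∃ c : V →₀ ℝ, (c.support : Set V) ⊆ Δ ∧ (∀ v : V, 0 ≤ c v) ∧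
      β = c.sum fun v r => r • v

/-- The subgroup generated by the reflections along the vectors of `I`. -/
def genSubgroup (I : Set V) : Subgroup (V ≃ₗᵢ[ℝ] V) :=
  Subgroup.closure {s | ∃ β ∈ I, IsReflAlong s β}

section Cone

variable {R M : Type*} [Ring R] [PartialOrder R] [IsOrderedRing R] [AddCommGroup M] [Module R M]

theorem exists_eq_smul_of_add_eq_smul {S : Set M} (hS : LinearIndepOn R id S) {x y b : M} {k : R}
    (hx : x ∈ PointedCone.hull R S) (hy : y ∈ PointedCone.hull R S) (hb : b ∈ S)
    (hxy : x + y = k • b) : ∃ c : R, x = c • b := by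
  obtain ⟨c, hcS, hc, rfl⟩ := PointedCone.mem_hull_set.mp hx
  obtain ⟨d, hdS, hd, rfl⟩ := PointedCone.mem_hull_set.mp hy
  have hcd : c + d = Finsupp.single b k := by
    refine linearIndepOn_iffₛ.mp hS _ (add_mem hcS hdS) _ (Finsupp.single_mem_supported R k hb) ?_
    rw [map_add, Finsupp.linearCombination_single]
    exact hxy
  have hcb : c = Finsupp.single b (c b) := by
    ext v
    rcases eq_or_ne v b with rfl | hv
    · simp
    · have hsum : c v + d v = 0 := by
        rw [← Finsupp.add_apply, hcd, Finsupp.single_eq_of_ne hv]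
      rw [Finsupp.single_eq_of_ne hv, ((add_eq_zero_iff_of_nonneg (hc v) (hd v)).mp hsum).1]
  exact ⟨c b, by rw [hcb]; simp⟩

end Cone

theorem exists_inner_pos_of_mem_hull {S : Set V} {x : V} (hx : x ∈ PointedCone.hull ℝ S)
    (hx0 : x ≠ 0) : ∃ b ∈ S, 0 < ⟪x, b⟫ := by
  by_contra! hS
  have hle : ∀ y ∈ PointedCone.hull ℝ S, ⟪x, y⟫ ≤ 0 := by
    intro y hy
    induction hy using Submodule.span_induction with
    | mem b hb => exact hS b hb
    | zero => simp
    | add y z _ _ hy hz => rw [inner_add_right]; exact add_nonpos hy hz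
    | smul c y _ hy =>
      rw [← Nonneg.coe_smul, real_inner_smul_right]
      exact mul_nonpos_of_nonneg_of_nonpos c.2 hy
  exact (real_inner_self_pos.mpr hx0).not_ge (hle x hx)

theorem exists_isReflAlong {α : V} (hα : α ≠ 0) : ∃ s : V ≃ₗᵢ[ℝ] V, IsReflAlong s α := by
  refine ⟨(ℝ ∙ α)ᗮ.reflection, hα, fun v => ?_⟩
  rw [Submodule.reflection_orthogonal_apply, Submodule.reflection_singleton_apply,
    real_inner_comm, real_inner_self_eq_norm_sq, mul_div_assoc]
  simp only [RCLike.ofReal_real_eq_id, id]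
  module

namespace IsReflAlong

variable {s t : V ≃ₗᵢ[ℝ] V} {α : V}

theorem unique (hs : IsReflAlong s α) (ht : IsReflAlong t α) : s = t := by
  ext v
  rw [hs.2, ht.2]

theorem apply_self (hs : IsReflAlong s α) : s α = -α := by
  rw [hs.2, mul_div_assoc, div_self (inner_self_ne_zero.mpr hs.1)]
  module

theorem apply_of_inner_eq_zero (hs : IsReflAlong s α) {x : V} (hx : ⟪x, α⟫ = 0) : s x = x := by
  simp [hs.2, hx]

theorem ne_one (hs : IsReflAlong s α) : s ≠ 1 := by
  rintro rfl
  have h : α = -α := hs.apply_self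
  rw [eq_neg_iff_add_eq_zero, ← two_smul ℝ] at h
  exact hs.1 ((smul_eq_zero_iff_right two_ne_zero).mp h)

theorem mul_self (hs : IsReflAlong s α) : s * s = 1 := by
  ext v
  rw [LinearIsometryEquiv.coe_mul, Function.comp_apply, hs.2 v, map_sub, map_smul, hs.apply_self,
    hs.2 v]
  simp

theorem inv_eq (hs : IsReflAlong s α) : s⁻¹ = s :=
  inv_eq_of_mul_eq_one_left hs.mul_self

theorem conj (hs : IsReflAlong s α) (u : V ≃ₗᵢ[ℝ] V) : IsReflAlong (u * s * u⁻¹) (u α) := by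
  refine ⟨by simpa using hs.1, fun v => ?_⟩
  obtain ⟨x, rfl⟩ := u.surjective v
  have hx : u⁻¹ (u x) = x := u.symm_apply_apply x
  simp only [LinearIsometryEquiv.coe_mul, Function.comp_apply, hx, hs.2 x, map_sub, map_smul,
    u.inner_map_map]

theorem of_smul {c : ℝ} (hs : IsReflAlong s (c • α)) : IsReflAlong s α := by
  obtain ⟨hc, hα⟩ := smul_ne_zero_iff.mp hs.1
  refine ⟨hα, fun v => ?_⟩
  have hαα : ⟪α, α⟫ ≠ 0 := inner_self_ne_zero.mpr hα
  rw [hs.2, smul_smul, real_inner_smul_right, real_inner_smul_right, real_inner_smul_left]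
  congr 2
  field_simp

end IsReflAlong

section Descent

variable {Δ : Set V} {a x : V}

theorem mem_genSubgroup {s : V ≃ₗᵢ[ℝ] V} {α : V} (hs : IsReflAlong s α) (hα : α ∈ Δ) :
    s ∈ genSubgroup Δ :=
  Subgroup.subset_closure ⟨α, hα, hs⟩

theorem exists_list_of_mem_genSubgroup {w : V ≃ₗᵢ[ℝ] V} (hw : w ∈ genSubgroup Δ) :
    ∃ l : List (V ≃ₗᵢ[ℝ] V), (∀ s ∈ l, ∃ α ∈ Δ, IsReflAlong s α) ∧ l.prod = w := by
  rw [genSubgroup, ← Subgroup.mem_toSubmonoid, Subgroup.closure_toSubmonoid] at hw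
  obtain ⟨l, hl, hlw⟩ := Submonoid.exists_list_of_mem_closure hw
  refine ⟨l, fun s hs => ?_, hlw⟩
  rcases hl s hs with h | ⟨α, hα, hsα⟩
  · exact h
  · exact ⟨α, hα, by rwa [← inv_inv s, hsα.inv_eq]⟩

theorem exists_map_eq_smul_of_mem_hull (hΔ : LinearIndepOn ℝ id Δ) (ha : ∀ α ∈ Δ, 0 < ⟪a, α⟫)
    (hfin : (orbitSet (genSubgroup Δ) x).Finite)
    (hsign : ∀ u ∈ genSubgroup Δ, u x ∈ PointedCone.hull ℝ Δ ∨ -u x ∈ PointedCone.hull ℝ Δ)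
    (hx : x ∈ PointedCone.hull ℝ Δ) (hx0 : x ≠ 0) :
    ∃ u ∈ genSubgroup Δ, ∃ α ∈ Δ, ∃ c : ℝ, u x = c • α := by
  obtain ⟨-, ⟨⟨u, hu, rfl⟩, hux⟩, hmin⟩ :=
    (hfin.inter_of_left (PointedCone.hull ℝ Δ)).exists_minimalFor (fun y => ⟪a, y⟫) _
      ⟨x, ⟨1, one_mem _, rfl⟩, hx⟩
  obtain ⟨α, hα, huα⟩ := exists_inner_pos_of_mem_hull hux (by simpa using hx0)
  have hα0 : α ≠ 0 := by
    rintro rfl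
    simp at huα
  obtain ⟨s, hs⟩ := exists_isReflAlong hα0
  have hsu : s * u ∈ genSubgroup Δ := mul_mem (mem_genSubgroup hs hα) hu
  have hlower : ⟪a, s (u x)⟫ < ⟪a, u x⟫ := by
    rw [hs.2, inner_sub_right, real_inner_smul_right, sub_lt_self_iff]
    exact mul_pos (div_pos (by positivity) (real_inner_self_pos.mpr hα0)) (ha α hα)
  have hneg : -s (u x) ∈ PointedCone.hull ℝ Δ :=
    (hsign _ hsu).resolve_left fun h => (hmin ⟨⟨s * u, hsu, rfl⟩, h⟩ hlower.le).not_gt hlower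
  refine ⟨u, hu, α, hα, exists_eq_smul_of_add_eq_smul hΔ hux hneg hα ?_
    (k := 2 * ⟪u x, α⟫ / ⟪α, α⟫)⟩
  rw [hs.2 (u x)]
  abel

theorem IsReflAlong.exists_conj_simple {s : V ≃ₗᵢ[ℝ] V} (hs : IsReflAlong s x)
    (hΔ : LinearIndepOn ℝ id Δ) (ha : ∀ α ∈ Δ, 0 < ⟪a, α⟫)
    (hfin : (orbitSet (genSubgroup Δ) x).Finite)
    (hsign : ∀ u ∈ genSubgroup Δ, u x ∈ PointedCone.hull ℝ Δ ∨ -u x ∈ PointedCone.hull ℝ Δ) :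
    ∃ u ∈ genSubgroup Δ, ∃ α ∈ Δ, IsReflAlong (u * s * u⁻¹) α := by
  suffices h : ∃ u ∈ genSubgroup Δ, ∃ α ∈ Δ, ∃ c : ℝ, u x = c • α by
    obtain ⟨u, hu, α, hα, c, hc⟩ := h
    exact ⟨u, hu, α, hα, (hc ▸ hs.conj u).of_smul⟩
  rcases hsign 1 (one_mem _) with hx | hx
  · exact exists_map_eq_smul_of_mem_hull hΔ ha hfin hsign hx hs.1
  · have hfin' : (orbitSet (genSubgroup Δ) (-x)).Finite := by
      refine hfin.neg.subset ?_
      rintro - ⟨u, hu, rfl⟩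
      exact ⟨u, hu, by simp⟩
    obtain ⟨u, hu, α, hα, c, hc⟩ := exists_map_eq_smul_of_mem_hull hΔ ha hfin'
      (fun u hu => by simpa [or_comm] using hsign u hu) hx (neg_ne_zero.mpr hs.1)
    exact ⟨u, hu, α, hα, -c, by rw [neg_smul, ← hc, map_neg, neg_neg]⟩

end Descent

namespace IsSimpleSystem

variable {Φp Δ : Set V}

theorem subset_hull (hΔ : IsSimpleSystem Φp Δ) : Φp ⊆ PointedCone.hull ℝ Δ := fun β hβ => by
  obtain ⟨c, hcΔ, hc, rfl⟩ := hΔ.2.2 β hβ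
  exact PointedCone.mem_hull_set.mpr ⟨c, hcΔ, hc, rfl⟩

theorem linearIndepOn (hΔ : IsSimpleSystem Φp Δ) : LinearIndepOn ℝ id Δ :=
  hΔ.2.1

end IsSimpleSystem

namespace IsRootSystem

variable {W : Subgroup (V ≃ₗᵢ[ℝ] V)} {Φ Δ : Set V} {a α γ : V} {s w : V ≃ₗᵢ[ℝ] V}

theorem map_mem (hΦ : IsRootSystem W Φ) (hw : w ∈ W) (hγ : γ ∈ Φ) : w γ ∈ Φ :=
  hΦ.stable w hw ▸ Set.mem_image_of_mem w hγ

theorem mem_of_isReflAlong (hΦ : IsRootSystem W Φ) (hγ : γ ∈ Φ) (hs : IsReflAlong s γ) :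
    s ∈ W := by
  rw [hΦ.gen]
  exact mem_genSubgroup hs hγ

theorem neg_mem (hΦ : IsRootSystem W Φ) (hγ : γ ∈ Φ) : -γ ∈ Φ := by
  have hmem : -γ ∈ ({γ, -γ} : Set V) := by simp
  rw [← hΦ.line γ hγ] at hmem
  exact hmem.1

theorem inner_ne_zero (hΦ : IsRootSystem W Φ) (ha : IsGeneric W a) (hγ : γ ∈ Φ) :
    ⟪a, γ⟫ ≠ 0 := by
  obtain ⟨s, hs⟩ := exists_isReflAlong (hΦ.ne_zero γ hγ)
  exact fun h => ha s (hΦ.mem_of_isReflAlong hγ hs) ⟨γ, hs⟩ (hs.apply_of_inner_eq_zero h)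

theorem neg_mem_posSystem_iff (hΦ : IsRootSystem W Φ) (ha : IsGeneric W a) (hγ : γ ∈ Φ) :
    -γ ∈ posSystem a Φ ↔ γ ∉ posSystem a Φ := by
  simp only [posSystem, Set.mem_ofPred_eq, hγ, hΦ.neg_mem hγ, true_and, inner_neg_right, neg_pos,
    not_lt]
  exact (hΦ.inner_ne_zero ha hγ).le_iff_lt.symm

theorem mem_hull_or_neg_mem_hull (hΦ : IsRootSystem W Φ) (ha : IsGeneric W a)
    (hΔ : IsSimpleSystem (posSystem a Φ) Δ) (hγ : γ ∈ Φ) :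
    γ ∈ PointedCone.hull ℝ Δ ∨ -γ ∈ PointedCone.hull ℝ Δ := by
  by_cases hpos : γ ∈ posSystem a Φ
  · exact .inl (hΔ.subset_hull hpos)
  · exact .inr (hΔ.subset_hull ((hΦ.neg_mem_posSystem_iff ha hγ).mpr hpos))

theorem genSubgroup_simple_le (hΦ : IsRootSystem W Φ) (hΔ : IsSimpleSystem (posSystem a Φ) Δ) :
    genSubgroup Δ ≤ W := by
  refine (Subgroup.closure_le W).mpr ?_
  rintro s ⟨α, hα, hs⟩
  exact hΦ.mem_of_isReflAlong (hΔ.1 hα).1 hs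

theorem genSubgroup_simple_eq (hΦ : IsRootSystem W Φ) (ha : IsGeneric W a)
    (hΔ : IsSimpleSystem (posSystem a Φ) Δ) : genSubgroup Δ = W := by
  have hle := hΦ.genSubgroup_simple_le hΔ
  refine hle.antisymm ?_
  rw [hΦ.gen, Subgroup.closure_le]
  rintro s ⟨β, hβ, hs⟩
  have horbit : orbitSet (genSubgroup Δ) β ⊆ Φ := by
    rintro - ⟨u, hu, rfl⟩
    exact hΦ.map_mem (hle hu) hβ
  obtain ⟨u, hu, α, hα, hconj⟩ := hs.exists_conj_simple hΔ.linearIndepOn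
    (fun α hα => (hΔ.1 hα).2) (hΦ.finite.subset horbit)
    (fun u hu => hΦ.mem_hull_or_neg_mem_hull ha hΔ (horbit ⟨u, hu, rfl⟩))
  have hs_eq : s = u⁻¹ * (u * s * u⁻¹) * u := by group
  rw [hs_eq]
  exact mul_mem (mul_mem (inv_mem hu) (mem_genSubgroup hconj hα)) hu

theorem eq_simple_of_neg_apply_mem (hΦ : IsRootSystem W Φ)
    (hΔ : IsSimpleSystem (posSystem a Φ) Δ) (hα : α ∈ Δ) (hs : IsReflAlong s α)
    (hγ : γ ∈ posSystem a Φ) (hneg : -s γ ∈ posSystem a Φ) : γ = α := by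
  obtain ⟨c, hc⟩ := exists_eq_smul_of_add_eq_smul hΔ.linearIndepOn (hΔ.subset_hull hγ)
    (hΔ.subset_hull hneg) hα (k := 2 * ⟪γ, α⟫ / ⟪α, α⟫) (by rw [hs.2 γ]; abel)
  have hmem : γ ∈ ({α, -α} : Set V) := hΦ.line α (hΔ.1 hα).1 ▸ ⟨hγ.1, c, hc⟩
  refine hmem.resolve_right fun h => ?_
  have hpos := hγ.2
  rw [h, inner_neg_right, neg_pos] at hpos
  exact hpos.not_gt (hΔ.1 hα).2

theorem exists_shorter_list_prod_eq_mul (hΦ : IsRootSystem W Φ) (ha : IsGeneric W a)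
    (hΔ : IsSimpleSystem (posSystem a Φ) Δ) (hα : α ∈ Δ) (hs : IsReflAlong s α)
    {l : List (V ≃ₗᵢ[ℝ] V)} (hl : ∀ r ∈ l, ∃ β ∈ Δ, IsReflAlong r β)
    (hneg : l.prod α ∉ posSystem a Φ) :
    ∃ l' : List (V ≃ₗᵢ[ℝ] V), (∀ r ∈ l', ∃ β ∈ Δ, IsReflAlong r β) ∧
      l'.length < l.length ∧ l'.prod = l.prod * s := by
  induction l with
  | nil => exact absurd (hΔ.1 hα) hneg
  | cons r l ih =>
    obtain ⟨⟨β, hβ, hr⟩, hl⟩ := List.forall_mem_cons.mp hl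
    by_cases hpos : l.prod α ∈ posSystem a Φ
    · have hrl : -r (l.prod α) ∈ posSystem a Φ :=
        (hΦ.neg_mem_posSystem_iff ha
          (hΦ.map_mem (hΦ.mem_of_isReflAlong (hΔ.1 hβ).1 hr) hpos.1)).mpr hneg
      have hlα : l.prod α = β := hΦ.eq_simple_of_neg_apply_mem hΔ hβ hr hpos hrl
      have hr_eq : r = l.prod * s * l.prod⁻¹ := hr.unique (hlα ▸ hs.conj l.prod)
      refine ⟨l, hl, by simp, ?_⟩
      calc l.prod = l.prod * (s * s) := by rw [hs.mul_self, mul_one]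
        _ = l.prod * s * l.prod⁻¹ * l.prod * s := by group
        _ = (r :: l).prod * s := by rw [← hr_eq, List.prod_cons]
    · obtain ⟨l', hl', hlen, hprod⟩ := ih hl hpos
      exact ⟨r :: l', List.forall_mem_cons.mpr ⟨⟨β, hβ, hr⟩, hl'⟩, by simpa using hlen,
        by rw [List.prod_cons, List.prod_cons, hprod, mul_assoc]⟩

theorem list_prod_eq_one_of_forall_simple (hΦ : IsRootSystem W Φ) (ha : IsGeneric W a)
    (hΔ : IsSimpleSystem (posSystem a Φ) Δ) (l : List (V ≃ₗᵢ[ℝ] V))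
    (hl : ∀ r ∈ l, ∃ β ∈ Δ, IsReflAlong r β) (hpos : ∀ α ∈ Δ, l.prod α ∈ posSystem a Φ) :
    l.prod = 1 := by
  induction hn : l.length using Nat.strong_induction_on generalizing l with
  | _ n ih =>
    rcases l.eq_nil_or_concat with rfl | ⟨l, s, rfl⟩
    · rfl
    simp only [List.concat_eq_append, List.forall_mem_append, List.forall_mem_singleton,
      List.prod_append, List.prod_singleton, List.length_append, List.length_singleton]
      at hl hpos hn ⊢
    obtain ⟨hl, α, hα, hs⟩ := hl
    have hneg : l.prod α ∉ posSystem a Φ := by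
      intro h
      have hα' := (hpos α hα).2
      rw [LinearIsometryEquiv.coe_mul, Function.comp_apply, hs.apply_self, map_neg,
        inner_neg_right, neg_pos] at hα'
      exact hα'.not_gt h.2
    obtain ⟨l', hl', hlen, hprod⟩ := hΦ.exists_shorter_list_prod_eq_mul ha hΔ hα hs hl hneg
    rw [← hprod] at hpos ⊢
    exact ih l'.length (by lia) l' hl' hpos rfl

theorem eq_one_of_forall_simple (hΦ : IsRootSystem W Φ) (ha : IsGeneric W a)
    (hΔ : IsSimpleSystem (posSystem a Φ) Δ) (hw : w ∈ W)
    (hpos : ∀ α ∈ Δ, w α ∈ posSystem a Φ) : w = 1 := by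
  rw [← hΦ.genSubgroup_simple_eq ha hΔ] at hw
  obtain ⟨l, hl, rfl⟩ := exists_list_of_mem_genSubgroup hw
  exact hΦ.list_prod_eq_one_of_forall_simple ha hΔ l hl hpos

theorem mem_hull_or_neg_mem_hull_of_isReflAlong (hΦ : IsRootSystem W Φ) (ha : IsGeneric W a)
    (hΔ : IsSimpleSystem (posSystem a Φ) Δ) (hs : s ∈ W) {x : V} (hsx : IsReflAlong s x) :
    x ∈ PointedCone.hull ℝ Δ ∨ -x ∈ PointedCone.hull ℝ Δ := by
  obtain ⟨α, hα, hsα⟩ : ∃ α ∈ Δ, s α ∉ posSystem a Φ := by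
    by_contra! hpos
    exact hsx.ne_one (hΦ.eq_one_of_forall_simple ha hΔ hs hpos)
  have hneg : -s α ∈ posSystem a Φ :=
    (hΦ.neg_mem_posSystem_iff ha (hΦ.map_mem hs (hΔ.1 hα).1)).mpr hsα
  have hcone : α + -s α ∈ PointedCone.hull ℝ Δ :=
    add_mem (PointedCone.subset_hull hα) (hΔ.subset_hull hneg)
  have hk : α + -s α = (2 * ⟪α, x⟫ / ⟪x, x⟫) • x := by rw [hsx.2 α]; abel
  rw [hk] at hcone
  rcases lt_trichotomy (2 * ⟪α, x⟫ / ⟪x, x⟫) 0 with hlt | heq | hgt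
  · rw [← neg_smul_neg] at hcone
    exact .inr ((PointedCone.smul_mem_iff _ (neg_pos.mpr hlt)).mp hcone)
  · rw [hsx.2, heq, zero_smul, sub_zero] at hsα
    exact absurd (hΔ.1 hα) hsα
  · exact .inl ((PointedCone.smul_mem_iff _ hgt).mp hcone)

end IsRootSystem

theorem reflection_conjugate_to_simple_general
    (W : Subgroup (V ≃ₗᵢ[ℝ] V)) (hWfin : (W : Set (V ≃ₗᵢ[ℝ] V)).Finite)
    (Φ : Set V) (hΦ : IsRootSystem W Φ) (a : V) (ha : IsGeneric W a)
    (Δ : Set V) (hΔ : IsSimpleSystem (posSystem a Φ) Δ)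
    (s : V ≃ₗᵢ[ℝ] V) (hs : s ∈ W) (hsrefl : IsReflection s) :
    ∃ w ∈ W, ∃ α ∈ Δ, IsReflAlong (w⁻¹ * s * w) α := by
  obtain ⟨x, hx⟩ := hsrefl
  have hgen : genSubgroup Δ = W := hΦ.genSubgroup_simple_eq ha hΔ
  have hfin : (orbitSet (genSubgroup Δ) x).Finite := by
    refine (hWfin.image fun w => w x).subset ?_
    rintro - ⟨w, hw, rfl⟩
    exact ⟨w, hgen ▸ hw, rfl⟩
  obtain ⟨u, hu, α, hα, hconj⟩ := hx.exists_conj_simple hΔ.linearIndepOn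
    (fun α hα => (hΔ.1 hα).2) hfin fun u hu =>
      have huW : u ∈ W := hgen ▸ hu
      hΦ.mem_hull_or_neg_mem_hull_of_isReflAlong ha hΔ
        (mul_mem (mul_mem huW hs) (inv_mem huW)) (hx.conj u)
  exact ⟨u⁻¹, inv_mem (hgen ▸ hu), α, hα, by rwa [inv_inv]⟩

/-- every reflection of `W` is conjugate in `W` to a simple reflection:
`s = w s_α w⁻¹` for some `w ∈ W` and `α ∈ Δ`, i.e. `w⁻¹ s w` is the reflection along `α`. -/
theorem reflection_conjugate_to_simple [FiniteDimensional ℝ V]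
    (W : Subgroup (V ≃ₗᵢ[ℝ] V)) (hWfin : (W : Set (V ≃ₗᵢ[ℝ] V)).Finite)
    (Φ : Set V) (hΦ : IsRootSystem W Φ) (a : V) (ha : IsGeneric W a)
    (Δ : Set V) (hΔ : IsSimpleSystem (posSystem a Φ) Δ)
    (s : V ≃ₗᵢ[ℝ] V) (hs : s ∈ W) (hsrefl : IsReflection s) :
    ∃ w ∈ W, ∃ α ∈ Δ, IsReflAlong (w⁻¹ * s * w) α :=
  reflection_conjugate_to_simple_general W hWfin Φ hΦ a ha Δ hΔ s hs hsrefl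
end

section
/- Let W be a finite reflection group with root system Φ, a a generic point, Φ⁺ = {α ∈ Φ : ⟨a,α⟩ > 0}, and Δ a simple system for Φ⁺. Fix α ∈ Δ and let W_{Δ∖{α}} be the subgroup of W generated by {s_β : β ∈ Δ, β ≠ α}. Then for every w ∈ W one has w(a) − a ∈ span_ℝ(Δ) and c_α(w(a) − a) ≤ 0, with equality c_α(w(a) − a) = 0 if and only if w ∈ W_{Δ∖{α}}. -/
/-!
A linear functional `f` that is nonnegative on `Δ` is nonnegative on every positive root. Build
`w ∈ W` as a product of simple reflections, multiplying on the right by one `s_β` at a time.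
Passing from `w` to `w s_β` subtracts a positive multiple of `w β` from `w a`, so `f (w a)` does not
increase as long as `w β` is a positive root. Equality forces `f` to vanish at all the roots `w β`
that occur, and inductively at all the letters `β`. Taking for `f` the `α`-coordinate gives the
claim.

A word meeting the positivity requirement at every letter exists: wherever it fails, the exchange
property replaces the word by a shorter one. Exchange in turn follows from the fact that `s_β`
permutes the positive roots other than `β`.
-/

open scoped RealInnerProductSpace

variable {V : Type*} [NormedAddCommGroup V] [InnerProductSpace ℝ V]

/-! ### Reflections -/

/-- The reflection along `β`, as a linear isometry. By convention it is the identity when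
`β = 0`, so that no nonvanishing hypothesis is needed to form it. -/
noncomputable def reflAlong (β : V) : V ≃ₗᵢ[ℝ] V := (ℝ ∙ β)ᗮ.reflection

lemma reflAlong_apply (β v : V) : reflAlong β v = v - (2 * ⟪v, β⟫ / ⟪β, β⟫) • β := by
  rw [reflAlong, Submodule.reflection_orthogonal_apply, Submodule.reflection_singleton_apply,
    real_inner_comm, real_inner_self_eq_norm_sq, neg_sub, ← Nat.cast_smul_eq_nsmul ℝ, smul_smul,
    mul_div_assoc, RCLike.ofReal_real_eq_id, id_eq, Nat.cast_ofNat]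

lemma isReflAlong_iff {s : V ≃ₗᵢ[ℝ] V} {β : V} : IsReflAlong s β ↔ β ≠ 0 ∧ s = reflAlong β := by
  simp only [IsReflAlong, LinearIsometryEquiv.ext_iff, reflAlong_apply]

lemma reflAlong_reflAlong (β v : V) : reflAlong β (reflAlong β v) = v :=
  Submodule.reflection_reflection _ v

lemma reflAlong_mul_self (β : V) : reflAlong β * reflAlong β = 1 :=
  Submodule.reflection_mul_reflection _

lemma reflAlong_inv (β : V) : (reflAlong β)⁻¹ = reflAlong β :=
  Submodule.reflection_inv

lemma reflAlong_self (β : V) : reflAlong β β = -β :=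
  Submodule.reflection_orthogonalComplement_singleton_eq_neg β

lemma reflAlong_neg (β : V) : reflAlong (-β) = reflAlong β := by
  ext v
  simp [reflAlong_apply, neg_div]

lemma mul_reflAlong (g : V ≃ₗᵢ[ℝ] V) (β : V) : g * reflAlong β = reflAlong (g β) * g := by
  ext v
  simp [reflAlong_apply]

lemma exists_pos_reflAlong_eq_sub_smul {v β : V} (h : 0 < ⟪v, β⟫) :
    ∃ t : ℝ, 0 < t ∧ reflAlong β v = v - t • β := by
  have hβ : β ≠ 0 := by
    rintro rfl
    simp at h
  exact ⟨_, div_pos (by positivity) (real_inner_self_pos.mpr hβ), reflAlong_apply β v⟩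

lemma reflAlong_mem_genSubgroup {I : Set V} {β : V} (hβ : β ∈ I) (hβ0 : β ≠ 0) :
    reflAlong β ∈ genSubgroup I :=
  Subgroup.subset_closure ⟨β, hβ, isReflAlong_iff.mpr ⟨hβ0, rfl⟩⟩

lemma sub_mem_span_of_mem_genSubgroup {I : Set V} {w : V ≃ₗᵢ[ℝ] V} (hw : w ∈ genSubgroup I)
    (v : V) : w v - v ∈ Submodule.span ℝ I := by
  induction hw using Subgroup.closure_induction generalizing v with
  | mem s hs =>
    obtain ⟨β, hβ, -, hs⟩ := hs
    rw [hs, sub_sub_cancel_left]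
    exact neg_mem (Submodule.smul_mem _ _ (Submodule.subset_span hβ))
  | one => simp
  | mul x y _ _ hx hy => simpa using add_mem (hx (y v)) (hy v)
  | inv x _ hx => simpa using neg_mem (hx (x⁻¹ v))

lemma map_apply_eq_of_mem_genSubgroup {I : Set V} {f : V →ₗ[ℝ] ℝ} (hf : ∀ β ∈ I, f β = 0)
    {w : V ≃ₗᵢ[ℝ] V} (hw : w ∈ genSubgroup I) (v : V) : f (w v) = f v := by
  have hker : Submodule.span ℝ I ≤ LinearMap.ker f := Submodule.span_le.mpr hf
  rw [← sub_eq_zero, ← map_sub]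
  exact hker (sub_mem_span_of_mem_genSubgroup hw v)

/-! ### Words in reflections -/

/-- The product of the reflections along the vectors of a list: the element of the group
represented by a word. -/
noncomputable def wordProd (L : List V) : V ≃ₗᵢ[ℝ] V := (L.map reflAlong).prod

lemma wordProd_nil : wordProd ([] : List V) = 1 := rfl

lemma wordProd_cons (β : V) (L : List V) : wordProd (β :: L) = reflAlong β * wordProd L := by
  simp [wordProd]

lemma wordProd_concat (L : List V) (β : V) :
    wordProd (L ++ [β]) = wordProd L * reflAlong β := by
  simp [wordProd]

lemma exists_wordProd_eq {I : Set V} {w : V ≃ₗᵢ[ℝ] V} (hw : w ∈ genSubgroup I) :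
    ∃ L : List V, (∀ β ∈ L, β ∈ I) ∧ wordProd L = w := by
  have append_letter {x : V ≃ₗᵢ[ℝ] V} {β : V} (hβ : β ∈ I) :
      (∃ L : List V, (∀ γ ∈ L, γ ∈ I) ∧ wordProd L = x) →
        ∃ L : List V, (∀ γ ∈ L, γ ∈ I) ∧ wordProd L = x * reflAlong β := by
    rintro ⟨L, hL, rfl⟩
    exact ⟨L ++ [β], by simpa [or_imp, forall_and] using ⟨hL, hβ⟩, wordProd_concat L β⟩
  induction hw using Subgroup.closure_induction_right with
  | one => exact ⟨[], by simp, wordProd_nil⟩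
  | mul_right x _ s hs ih =>
    obtain ⟨β, hβ, hs⟩ := hs
    rw [(isReflAlong_iff.mp hs).2]
    exact append_letter hβ ih
  | mul_inv_cancel x _ s hs ih =>
    obtain ⟨β, hβ, hs⟩ := hs
    rw [(isReflAlong_iff.mp hs).2, reflAlong_inv]
    exact append_letter hβ ih

/-! ### Coordinate functionals -/

section Coordinates

variable {K E : Type*} [DivisionRing K] [AddCommGroup E] [Module K E] {Δ : Set E} {α : E}

/-- `f` is a coordinate functional of `Δ` at `α`: on `span K Δ` it is the coordinate `c_α`, while
its values on a complement of the span are left unspecified. -/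
structure IsCoordFunctional (Δ : Set E) (α : E) (f : E →ₗ[K] K) : Prop where
  map_self : f α = 1
  map_of_ne : ∀ β ∈ Δ, β ≠ α → f β = 0

lemma exists_isCoordFunctional (hΔ : LinearIndependent K ((↑) : Δ → E)) (hα : α ∈ Δ) :
    ∃ f : E →ₗ[K] K, IsCoordFunctional Δ α f := by
  have hΔ : LinearIndepOn K id Δ := hΔ
  have hsub : Δ ⊆ hΔ.extend (Set.subset_univ Δ) := hΔ.subset_extend _
  let b := Module.Basis.extend hΔ
  have hb (β : E) (hβ : β ∈ Δ) : b.repr β = Finsupp.single ⟨β, hsub hβ⟩ 1 := by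
    rw [← b.repr_self, Module.Basis.extend_apply_self]
  refine ⟨b.coord ⟨α, hsub hα⟩, ?_, fun β hβ hne => ?_⟩
  · rw [Module.Basis.coord_apply, hb α hα, Finsupp.single_eq_same]
  · rw [Module.Basis.coord_apply, hb β hβ, Finsupp.single_eq_of_ne]
    exact fun h => hne (congrArg Subtype.val h).symm

lemma IsCoordFunctional.map_finsuppSum {f : E →ₗ[K] K} (hf : IsCoordFunctional Δ α f)
    {c : E →₀ K} (hc : (c.support : Set E) ⊆ Δ) : f (c.sum fun v r => r • v) = c α := by
  rw [Finsupp.sum, map_sum, Finset.sum_eq_single α]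
  · rw [map_smul, hf.map_self, smul_eq_mul, mul_one]
  · intro v hv hne
    rw [map_smul, hf.map_of_ne v (hc hv) hne, smul_zero]
  · intro hα
    rw [Finsupp.notMem_support_iff.mp hα, zero_smul, map_zero]

end Coordinates

/-! ### Positive and simple roots -/

section Roots

variable {W : Subgroup (V ≃ₗᵢ[ℝ] V)} {Φ Φp Δ : Set V} {a β γ : V}

lemma IsSimpleSystem.map_nonneg (hΔ : IsSimpleSystem Φp Δ) {f : V →ₗ[ℝ] ℝ}
    (hf : ∀ β ∈ Δ, 0 ≤ f β) (hγ : γ ∈ Φp) : 0 ≤ f γ := by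
  obtain ⟨c, hc, hc0, rfl⟩ := hΔ.2.2 γ hγ
  rw [Finsupp.sum, map_sum]
  refine Finset.sum_nonneg fun v hv => ?_
  rw [map_smul]
  exact mul_nonneg (hc0 v) (hf v (hc hv))

lemma IsSimpleSystem.exists_inner_pos (hΔ : IsSimpleSystem Φp Δ) (hγ : γ ∈ Φp) (hγ0 : γ ≠ 0) :
    ∃ β ∈ Δ, 0 < ⟪γ, β⟫ := by
  by_contra! hle
  have h : 0 ≤ (-innerₗ V γ) γ := hΔ.map_nonneg (fun β hβ => neg_nonneg.mpr (hle β hβ)) hγ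
  exact (real_inner_self_pos.mpr hγ0).not_ge (neg_nonneg.mp h)

lemma IsRootSystem.reflAlong_mem (hΦ : IsRootSystem W Φ) (hβ : β ∈ Φ) : reflAlong β ∈ W := by
  rw [hΦ.gen]
  exact reflAlong_mem_genSubgroup hβ (hΦ.ne_zero β hβ)

lemma IsRootSystem.map_mem_s11 (hΦ : IsRootSystem W Φ) {w : V ≃ₗᵢ[ℝ] V} (hw : w ∈ W) (hβ : β ∈ Φ) :
    w β ∈ Φ :=
  hΦ.stable w hw ▸ Set.mem_image_of_mem w hβ

lemma IsRootSystem.neg_mem_s11 (hΦ : IsRootSystem W Φ) (hβ : β ∈ Φ) : -β ∈ Φ :=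
  reflAlong_self β ▸ hΦ.map_mem_s11 (hΦ.reflAlong_mem hβ) hβ

lemma IsGeneric.inner_ne_zero (ha : IsGeneric W a) (hΦ : IsRootSystem W Φ) (hβ : β ∈ Φ) :
    ⟪a, β⟫ ≠ 0 := by
  intro h
  refine ha _ (hΦ.reflAlong_mem hβ) ⟨β, isReflAlong_iff.mpr ⟨hΦ.ne_zero β hβ, rfl⟩⟩ ?_
  simp [reflAlong_apply, h]

lemma IsRootSystem.neg_mem_posSystem_iff_s11 (hΦ : IsRootSystem W Φ) (ha : IsGeneric W a)
    (hβ : β ∈ Φ) : -β ∈ posSystem a Φ ↔ β ∉ posSystem a Φ := by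
  simp [posSystem, hβ, hΦ.neg_mem_s11 hβ, (ha.inner_ne_zero hΦ hβ).le_iff_lt]

lemma IsRootSystem.exists_mem_support_ne (hΦ : IsRootSystem W Φ) (hβ : β ∈ posSystem a Φ)
    (hγ : γ ∈ posSystem a Φ) (hne : γ ≠ β) {c : V →₀ ℝ} (hc : γ = c.sum fun v r => r • v) :
    ∃ v ∈ c.support, v ≠ β := by
  by_contra! hsupp
  have hγβ : γ = c β • β := by
    rw [hc]
    exact Finsupp.sum_eq_single β (fun v hv hvβ => absurd (hsupp v (by simpa using hv)) hvβ)
      (fun _ => zero_smul ℝ β)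
  have hline : γ ∈ ({β, -β} : Set V) := hΦ.line β hβ.1 ▸ ⟨hγ.1, c β, hγβ⟩
  obtain rfl : γ = -β := hline.resolve_left hne
  have hneg : 0 < ⟪a, -β⟫ := hγ.2
  rw [inner_neg_right] at hneg
  linarith [hβ.2]

lemma IsCoordFunctional.nonneg_of_mem {f : V →ₗ[ℝ] ℝ} {α : V} (hf : IsCoordFunctional Δ α f)
    (hβ : β ∈ Δ) : 0 ≤ f β := by
  rcases eq_or_ne β α with rfl | hne
  · exact hf.map_self ▸ zero_le_one
  · exact (hf.map_of_ne β hβ hne).ge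

-- A positive root `γ ≠ β` has a positive coordinate other than the one at `β`, and `s_β` does not
-- change that coordinate.
lemma IsRootSystem.reflAlong_mem_posSystem (hΦ : IsRootSystem W Φ) (ha : IsGeneric W a)
    (hΔ : IsSimpleSystem (posSystem a Φ) Δ) (hβ : β ∈ Δ) (hγ : γ ∈ posSystem a Φ) (hne : γ ≠ β) :
    reflAlong β γ ∈ posSystem a Φ := by
  have hβp := hΔ.1 hβ
  obtain ⟨c, hc, hc0, hγc⟩ := hΔ.2.2 γ hγ
  obtain ⟨v, hv, hvβ⟩ := hΦ.exists_mem_support_ne hβp hγ hne hγc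
  obtain ⟨f, hf⟩ := exists_isCoordFunctional hΔ.2.1 (hc hv)
  have hfγ : 0 < f γ := by
    rw [hγc, hf.map_finsuppSum hc]
    exact (hc0 v).lt_of_ne' (Finsupp.mem_support_iff.mp hv)
  have hfs : f (reflAlong β γ) = f γ := by
    rw [reflAlong_apply, map_sub, map_smul, hf.map_of_ne β hβ hvβ.symm, smul_zero, sub_zero]
  by_contra hneg
  rw [← hΦ.neg_mem_posSystem_iff_s11 ha (hΦ.map_mem_s11 (hΦ.reflAlong_mem hβp.1) hγ.1)] at hneg
  have hle : 0 ≤ f (-reflAlong β γ) := hΔ.map_nonneg (fun _ => hf.nonneg_of_mem) hneg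
  rw [map_neg, hfs] at hle
  linarith

-- Descent on `⟪a, γ⟫`: a non-simple `γ` is lowered by some simple reflection `s_β`, and
-- `s_γ = s_β s_{s_β γ} s_β`.
lemma IsRootSystem.reflAlong_mem_genSubgroup_of_mem_posSystem (hΦ : IsRootSystem W Φ)
    (ha : IsGeneric W a) (hΔ : IsSimpleSystem (posSystem a Φ) Δ) (hγ : γ ∈ posSystem a Φ) :
    reflAlong γ ∈ genSubgroup Δ := by
  have hwf : (posSystem a Φ).WellFoundedOn ((⟪a, ·⟫) ⁻¹'o (· < ·)) :=
    (hΦ.finite.subset fun _ h => h.1).wellFoundedOn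
  refine hwf.induction (P := (reflAlong · ∈ genSubgroup Δ)) hγ fun γ hγ ih => ?_
  have hγ0 : γ ≠ 0 := hΦ.ne_zero γ hγ.1
  by_cases hγΔ : γ ∈ Δ
  · exact reflAlong_mem_genSubgroup hγΔ hγ0
  obtain ⟨β, hβ, hβγ⟩ := hΔ.exists_inner_pos hγ hγ0
  have hβp := hΔ.1 hβ
  have hmem : reflAlong β ∈ genSubgroup Δ :=
    reflAlong_mem_genSubgroup hβ (hΦ.ne_zero β hβp.1)
  have hlt : ⟪a, reflAlong β γ⟫ < ⟪a, γ⟫ := by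
    obtain ⟨t, ht, hs⟩ := exists_pos_reflAlong_eq_sub_smul hβγ
    rw [hs, inner_sub_right, inner_smul_right]
    linarith [mul_pos ht hβp.2]
  have hpos : reflAlong β γ ∈ posSystem a Φ :=
    hΦ.reflAlong_mem_posSystem ha hΔ hβ hγ (ne_of_mem_of_not_mem hβ hγΔ).symm
  have hconj : reflAlong γ = reflAlong β * reflAlong (reflAlong β γ) * reflAlong β := by
    rw [mul_reflAlong (reflAlong β), reflAlong_reflAlong, mul_assoc, reflAlong_mul_self, mul_one]
  rw [hconj]
  exact mul_mem (mul_mem hmem (ih _ hpos hlt)) hmem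

lemma IsRootSystem.le_genSubgroup (hΦ : IsRootSystem W Φ) (ha : IsGeneric W a)
    (hΔ : IsSimpleSystem (posSystem a Φ) Δ) : W ≤ genSubgroup Δ := by
  rw [hΦ.gen, Subgroup.closure_le]
  rintro s ⟨β, hβ, hs⟩
  rw [(isReflAlong_iff.mp hs).2]
  by_cases hpos : β ∈ posSystem a Φ
  · exact hΦ.reflAlong_mem_genSubgroup_of_mem_posSystem ha hΔ hpos
  · rw [← reflAlong_neg]
    exact hΦ.reflAlong_mem_genSubgroup_of_mem_posSystem ha hΔ
      ((hΦ.neg_mem_posSystem_iff_s11 ha hβ).mpr hpos)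

/-! ### The exchange property -/

lemma IsRootSystem.exists_shorter_word_mul_reflAlong (hΦ : IsRootSystem W Φ) (ha : IsGeneric W a)
    (hΔ : IsSimpleSystem (posSystem a Φ) Δ) (hβ : β ∈ Δ) {L : List V} (hL : ∀ γ ∈ L, γ ∈ Δ)
    (hneg : wordProd L β ∉ posSystem a Φ) :
    ∃ M : List V, (∀ γ ∈ M, γ ∈ Δ) ∧ M.length < L.length ∧
      wordProd M = wordProd L * reflAlong β := by
  induction L with
  | nil => exact absurd (hΔ.1 hβ) hneg
  | cons γ T ih =>
    obtain ⟨hγ, hT⟩ := List.forall_mem_cons.mp hL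
    by_cases hpos : wordProd T β ∈ posSystem a Φ
    -- The sign changes at the letter `γ`, so `γ` is the image of `β` and is the letter to delete.
    · have hγβ : wordProd T β = γ := by
        by_contra hne
        rw [wordProd_cons] at hneg
        exact hneg (hΦ.reflAlong_mem_posSystem ha hΔ hγ hpos hne)
      refine ⟨T, hT, by simp, ?_⟩
      rw [wordProd_cons, mul_assoc, mul_reflAlong, hγβ, ← mul_assoc, reflAlong_mul_self, one_mul]
    · obtain ⟨M, hM, hlen, hprod⟩ := ih hT hpos
      refine ⟨γ :: M, List.forall_mem_cons.mpr ⟨hγ, hM⟩, by simpa using hlen, ?_⟩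
      rw [wordProd_cons, wordProd_cons, hprod, mul_assoc]

-- Since `w β` is positive exactly when `w s_β` is longer than `w`, this is induction along reduced
-- words.
@[elab_as_elim]
theorem IsRootSystem.ascent_induction (hΦ : IsRootSystem W Φ) (ha : IsGeneric W a)
    (hΔ : IsSimpleSystem (posSystem a Φ) Δ) {P : (V ≃ₗᵢ[ℝ] V) → Prop} (one : P 1)
    (mul_reflAlong : ∀ w, ∀ β ∈ Δ, w β ∈ posSystem a Φ → P w → P (w * reflAlong β))
    {w : V ≃ₗᵢ[ℝ] V} (hw : w ∈ W) : P w := by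
  obtain ⟨L, hL, rfl⟩ := exists_wordProd_eq (hΦ.le_genSubgroup ha hΔ hw)
  clear hw
  induction hn : L.length using Nat.strong_induction_on generalizing L with
  | _ n ih =>
    subst hn
    rcases L.eq_nil_or_concat' with rfl | ⟨T, β, rfl⟩
    · exact one
    obtain ⟨hT, hβ⟩ : (∀ γ ∈ T, γ ∈ Δ) ∧ β ∈ Δ := by
      simpa [or_imp, forall_and] using hL
    rw [wordProd_concat]
    by_cases hpos : wordProd T β ∈ posSystem a Φ
    · exact mul_reflAlong _ β hβ hpos (ih _ (by simp) T hT rfl)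
    · obtain ⟨M, hM, hlen, hprod⟩ := hΦ.exists_shorter_word_mul_reflAlong ha hΔ hβ hT hpos
      exact hprod ▸ ih _ (by simp; omega) M hM rfl

/-! ### Functionals nonnegative on the simple roots -/

theorem IsRootSystem.map_apply_le_and_eq_iff (hΦ : IsRootSystem W Φ) (ha : IsGeneric W a)
    (hΔ : IsSimpleSystem (posSystem a Φ) Δ) {f : V →ₗ[ℝ] ℝ} (hf : ∀ β ∈ Δ, 0 ≤ f β)
    {w : V ≃ₗᵢ[ℝ] V} (hw : w ∈ W) :
    f (w a) ≤ f a ∧ (f (w a) = f a ↔ w ∈ genSubgroup {β ∈ Δ | f β = 0}) := by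
  have map_eq {u : V ≃ₗᵢ[ℝ] V} (hu : u ∈ genSubgroup {β ∈ Δ | f β = 0}) (v : V) : f (u v) = f v :=
    map_apply_eq_of_mem_genSubgroup (fun _ hβ => hβ.2) hu v
  suffices f (w a) ≤ f a ∧ (f (w a) = f a → w ∈ genSubgroup {β ∈ Δ | f β = 0}) from
    ⟨this.1, this.2, fun hw => map_eq hw a⟩
  refine hΦ.ascent_induction ha hΔ ?_ ?_ hw
  · exact ⟨le_rfl, fun _ => one_mem _⟩
  · rintro w β hβ hwβ ⟨ih_le, ih_mem⟩
    have hβp := hΔ.1 hβ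
    obtain ⟨t, ht, hs⟩ := exists_pos_reflAlong_eq_sub_smul hβp.2
    have hstep : f ((w * reflAlong β) a) = f (w a) - t * f (w β) := by
      simp [hs]
    have hfwβ : 0 ≤ f (w β) := hΔ.map_nonneg hf hwβ
    have hdrop : 0 ≤ t * f (w β) := mul_nonneg ht.le hfwβ
    rw [hstep]
    refine ⟨by linarith, fun heq => ?_⟩
    have hw : w ∈ genSubgroup {β ∈ Δ | f β = 0} := ih_mem (by linarith)
    have hfβ : f β = 0 := by
      rw [← map_eq hw]
      exact (mul_eq_zero.mp (by linarith)).resolve_left ht.ne'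
    exact mul_mem hw (reflAlong_mem_genSubgroup ⟨hβ, hfβ⟩ (hΦ.ne_zero β hβp.1))

end Roots

theorem coordinate_nonpos_and_vanishing_iff_general
    (W : Subgroup (V ≃ₗᵢ[ℝ] V)) (Φ : Set V) (hΦ : IsRootSystem W Φ) (a : V) (ha : IsGeneric W a)
    (Δ : Set V) (hΔ : IsSimpleSystem (posSystem a Φ) Δ)
    (α : V) (hα : α ∈ Δ) (w : V ≃ₗᵢ[ℝ] V) (hw : w ∈ W) :
    w a - a ∈ Submodule.span ℝ Δ ∧
    ∀ c : V →₀ ℝ, (c.support : Set V) ⊆ Δ → w a - a = (c.sum fun v r => r • v) →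
      c α ≤ 0 ∧ (c α = 0 ↔ w ∈ genSubgroup (Δ \ {α})) := by
  refine ⟨sub_mem_span_of_mem_genSubgroup (hΦ.le_genSubgroup ha hΔ hw) a, fun c hc hwc => ?_⟩
  obtain ⟨f, hf⟩ := exists_isCoordFunctional hΔ.2.1 hα
  have hcα : c α = f (w a) - f a := by rw [← map_sub, hwc, hf.map_finsuppSum hc]
  have hzero : {β ∈ Δ | f β = 0} = Δ \ {α} := by
    ext β
    refine and_congr_right fun hβ => ⟨?_, hf.map_of_ne β hβ⟩
    rintro hfβ rfl
    exact one_ne_zero (hf.map_self.symm.trans hfβ)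
  rw [hcα, sub_nonpos, sub_eq_zero, ← hzero]
  exact hΦ.map_apply_le_and_eq_iff ha hΔ (fun _ => hf.nonneg_of_mem) hw

/-- for every `w ∈ W`, `w(a) - a ∈ span ℝ Δ`, its `α`-coordinate (w.r.t. the
basis `Δ`) is nonpositive, and it vanishes iff `w` lies in the standard parabolic subgroup
generated by the simple reflections `s_β`, `β ∈ Δ ∖ {α}`. -/
theorem coordinate_nonpos_and_vanishing_iff [FiniteDimensional ℝ V]
    (W : Subgroup (V ≃ₗᵢ[ℝ] V)) (hWfin : (W : Set (V ≃ₗᵢ[ℝ] V)).Finite)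
    (Φ : Set V) (hΦ : IsRootSystem W Φ) (a : V) (ha : IsGeneric W a)
    (Δ : Set V) (hΔ : IsSimpleSystem (posSystem a Φ) Δ)
    (α : V) (hα : α ∈ Δ) (w : V ≃ₗᵢ[ℝ] V) (hw : w ∈ W) :
    w a - a ∈ Submodule.span ℝ Δ ∧
    ∀ c : V →₀ ℝ, (c.support : Set V) ⊆ Δ → w a - a = (c.sum fun v r => r • v) →
      c α ≤ 0 ∧ (c α = 0 ↔ w ∈ genSubgroup (Δ \ {α})) :=
  coordinate_nonpos_and_vanishing_iff_general W Φ hΦ a ha Δ hΔ α hα w hw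
end
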